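/- Let n ≥ 3. The one-sided kissing number B(n) := B(n,π/3) satisfies 2·B(n) ≤ A(n−1, arccos(1/√3)) + k(n) and B(n) ≤ k(n) − 2, where k(n) := A(n,π/3) and A(n−1,·) refers to codes on the unit sphere S^{n−2} ⊂ ℝ^{n−1}. -/

import Mathlib

noncomputable section

/-- The "North pole" `(0, …, 0, 1)` of the unit sphere in `ℝ^n`. -/
def north (n : ℕ) : EuclideanSpace ℝ (Fin n) :=
  if h : 0 < n then EuclideanSpace.single ⟨n - 1, Nat.sub_lt h Nat.one_pos⟩ 1 else 0

/-- Angular distance between two points: `arccos ⟨x, y⟩`. -/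
def aDist {n : ℕ} (x y : EuclideanSpace ℝ (Fin n)) : ℝ := Real.arccos (inner ℝ x y : ℝ)

/-- A finite set of unit vectors with pairwise angular distance at least `θ`. -/
def IsCode {n : ℕ} (θ : ℝ) (C : Finset (EuclideanSpace ℝ (Fin n))) : Prop :=
  (∀ x ∈ C, ‖x‖ = 1) ∧ ∀ x ∈ C, ∀ y ∈ C, x ≠ y → θ ≤ aDist x y

/-- `A(n, θ)`: maximal size of a `θ`-code on the unit sphere `S^{n-1} ⊂ ℝ^n`. -/
def sphereMax (n : ℕ) (θ : ℝ) : ℕ :=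
  sSup {M | ∃ C : Finset (EuclideanSpace ℝ (Fin n)), IsCode θ C ∧ C.card = M}

/-- `A(n, θ, φ)`: maximal size of a `θ`-code in the cap of angular radius `φ` about the
North pole. -/
def capMax (n : ℕ) (θ φ : ℝ) : ℕ :=
  sSup {M | ∃ C : Finset (EuclideanSpace ℝ (Fin n)), IsCode θ C ∧
    (∀ x ∈ C, aDist x (north n) ≤ φ) ∧ C.card = M}

/-- `A(n, θ, [ψ, φ])`: maximal size of a `θ`-code in the strip `Z(n, [ψ, φ])`. -/
def stripMax (n : ℕ) (θ ψ φ : ℝ) : ℕ :=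
  sSup {M | ∃ C : Finset (EuclideanSpace ℝ (Fin n)), IsCode θ C ∧
    (∀ x ∈ C, ψ ≤ aDist x (north n) ∧ aDist x (north n) ≤ φ) ∧ C.card = M}

/-- `m(n, d)`: maximal number of points in the closed unit ball of `ℝ^n` with pairwise
Euclidean distances at least `d`. -/
def ballMax (n : ℕ) (d : ℝ) : ℕ :=
  sSup {M | ∃ C : Finset (EuclideanSpace ℝ (Fin n)), (∀ x ∈ C, ‖x‖ ≤ 1) ∧
    (∀ x ∈ C, ∀ y ∈ C, x ≠ y → d ≤ dist x y) ∧ C.card = M}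

/-- `ω(θ, α, β) = arccos((cos θ - cos α cos β) / (sin α sin β))`. -/
def omega2 (θ α β : ℝ) : ℝ :=
  Real.arccos ((Real.cos θ - Real.cos α * Real.cos β) / (Real.sin α * Real.sin β))

/-- `ω(θ, α) := ω(θ, α, α)`. -/
def omega1 (θ α : ℝ) : ℝ := omega2 θ α α

end

/-! Reflect the points of a one-sided `θ`-code whose height above the equator is at least
`sin (θ / 2)` in the equatorial hyperplane: they stay at angle at least `θ` from all points of the
code. Project the remaining points onto the equator: their heights are so small that the angles
between them stay at least `arccos (cos θ / cos (θ / 2))`. So, with `H` high and `L` low points,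
`(H + L) + H ≤ A(n, θ)` and `L ≤ A(n - 1, arccos (cos θ / cos (θ / 2)))`, and adding the two gives
the first inequality. For the second one, the two points `± cos θ • u - sin θ • e`, where `u` is a
unit vector on the equator, can be added to any one-sided `θ`-code as long as `θ ≤ π / 3`. -/

section

open Real Submodule
open Module (finrank)
open scoped NNReal RealInnerProductSpace

section Separation

lemma packingNumber_ne_top_of_totallyBounded {X : Type*} [PseudoEMetricSpace X] {A : Set X}
    (hA : TotallyBounded A) {ε : ℝ≥0} (hε : ε ≠ 0) : Metric.packingNumber ε A ≠ ⊤ := by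
  obtain ⟨N, -, hN, hcover⟩ :=
    Metric.exists_finite_isCover_of_totallyBounded (ε := ε / 2) (by positivity) hA
  have hle : Metric.packingNumber (2 * (ε / 2)) A ≤ N.encard :=
    (Metric.packingNumber_two_mul_le_externalCoveringNumber _ A).trans
      hcover.externalCoveringNumber_le_encard
  rw [mul_div_cancel₀ ε two_ne_zero] at hle
  exact (hle.trans_lt hN.encard_lt_top).ne

variable {n : ℕ} {θ : ℝ} {C : Finset (EuclideanSpace ℝ (Fin n))}

lemma IsCode.inner_le_cos (hC : IsCode θ C) (hθ : 0 ≤ θ) {x y : EuclideanSpace ℝ (Fin n)}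
    (hx : x ∈ C) (hy : y ∈ C) (hxy : x ≠ y) : ⟪x, y⟫ ≤ cos θ := by
  have hinner : |⟪x, y⟫| ≤ 1 := by
    simpa only [hC.1 x hx, hC.1 y hy, mul_one] using abs_real_inner_le_norm x y
  calc ⟪x, y⟫ = cos (aDist x y) := (cos_arccos (abs_le.1 hinner).1 (abs_le.1 hinner).2).symm
    _ ≤ cos θ := cos_le_cos_of_nonneg_of_le_pi hθ (arccos_le_pi _) (hC.2 x hx y hy hxy)

lemma IsCode.isSeparated (hC : IsCode θ C) (hθ : 0 < θ) (hθπ : θ ≤ π) :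
    Metric.IsSeparated (ENNReal.ofReal (sin (θ / 2))) (C : Set (EuclideanSpace ℝ (Fin n))) := by
  intro x hx y hy hxy
  have hsin : 0 < sin (θ / 2) := sin_pos_of_pos_of_lt_pi (by linarith) (by linarith)
  have hcos : cos θ = 1 - 2 * sin (θ / 2) ^ 2 := by
    rw [← cos_two_mul_eq_one_sub, mul_div_cancel₀ θ two_ne_zero]
  have hdist : dist x y ^ 2 = 2 - 2 * ⟪x, y⟫ := by
    rw [dist_eq_norm, norm_sub_sq_real, hC.1 x hx, hC.1 y hy]
    ring
  have hinner := hC.inner_le_cos hθ.le hx hy hxy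
  rw [edist_dist, ENNReal.ofReal_lt_ofReal_iff_of_nonneg hsin.le]
  exact lt_of_pow_lt_pow_left₀ 2 dist_nonneg (by nlinarith)

lemma bddAbove_card_isCode (n : ℕ) (hθ : 0 < θ) (hθπ : θ ≤ π) :
    BddAbove {M | ∃ C : Finset (EuclideanSpace ℝ (Fin n)), IsCode θ C ∧ C.card = M} := by
  have hsin : 0 < sin (θ / 2) := sin_pos_of_pos_of_lt_pi (by linarith) (by linarith)
  have hfinite := packingNumber_ne_top_of_totallyBounded
    (isCompact_sphere (0 : EuclideanSpace ℝ (Fin n)) 1).totallyBounded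
    (Real.toNNReal_pos.2 hsin).ne'
  refine ⟨ENat.toNat (Metric.packingNumber (sin (θ / 2)).toNNReal
    (Metric.sphere (0 : EuclideanSpace ℝ (Fin n)) 1)), ?_⟩
  rintro _ ⟨C, hC, rfl⟩
  have hsphere : (C : Set (EuclideanSpace ℝ (Fin n))) ⊆ Metric.sphere 0 1 := fun x hx => by
    simpa only [mem_sphere_zero_iff_norm] using hC.1 x hx
  have hcard := (hC.isSeparated hθ hθπ).encard_le_packingNumber hsphere
  rw [Set.encard_coe_eq_coe_finsetCard] at hcard
  exact ENat.toNat_le_toNat hcard hfinite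

lemma IsCode.card_le_sphereMax (hC : IsCode θ C) (hθ : 0 < θ) (hθπ : θ ≤ π) :
    C.card ≤ sphereMax n θ :=
  le_csSup (bddAbove_card_isCode n hθ hθπ) ⟨C, hC, rfl⟩

lemma exists_isCode_card_eq_capMax (n : ℕ) (hθ : 0 < θ) (hθπ : θ ≤ π) (φ : ℝ) :
    ∃ C : Finset (EuclideanSpace ℝ (Fin n)),
      IsCode θ C ∧ (∀ x ∈ C, aDist x (north n) ≤ φ) ∧ C.card = capMax n θ φ := by
  refine Nat.sSup_mem (s := {M | ∃ C : Finset (EuclideanSpace ℝ (Fin n)), IsCode θ C ∧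
    (∀ x ∈ C, aDist x (north n) ≤ φ) ∧ C.card = M}) ⟨0, ∅, by simp [IsCode]⟩
    ((bddAbove_card_isCode n hθ hθπ).mono ?_)
  rintro _ ⟨C, hC, -, rfl⟩
  exact ⟨C, hC, rfl⟩

end Separation

variable {ι κ E F : Type*} [NormedAddCommGroup E] [InnerProductSpace ℝ E]
  [NormedAddCommGroup F] [InnerProductSpace ℝ F]

/-- A `θ`-code indexed by `s` on the unit sphere of an inner product space. Separation is
expressed through inner products, which amounts to angles at least `θ` when `0 ≤ θ ≤ π`. Families
rather than sets of vectors make it possible to map or to unite codes without showing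
injectivity or disjointness, both of which follow from `0 < θ ≤ π`. -/
structure IsCodeFamily (θ : ℝ) (s : Finset ι) (x : ι → E) : Prop where
  norm_eq_one : ∀ i ∈ s, ‖x i‖ = 1
  inner_le_cos : ∀ i ∈ s, ∀ j ∈ s, i ≠ j → ⟪x i, x j⟫ ≤ cos θ

lemma IsCode.isCodeFamily {n : ℕ} {θ : ℝ} {C : Finset (EuclideanSpace ℝ (Fin n))}
    (hC : IsCode θ C) (hθ : 0 ≤ θ) : IsCodeFamily θ C id :=
  ⟨hC.1, fun _ hx _ hy hxy => hC.inner_le_cos hθ hx hy hxy⟩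

namespace IsCodeFamily

variable {θ : ℝ} {s t : Finset ι} {x : ι → E}

lemma mono (hx : IsCodeFamily θ s x) (hts : t ⊆ s) : IsCodeFamily θ t x :=
  ⟨fun i hi => hx.norm_eq_one i (hts hi),
    fun i hi j hj => hx.inner_le_cos i (hts hi) j (hts hj)⟩

lemma map (hx : IsCodeFamily θ s x) (f : E →ₗᵢ[ℝ] F) : IsCodeFamily θ s (f ∘ x) where
  norm_eq_one i hi := (f.norm_map _).trans (hx.norm_eq_one i hi)
  inner_le_cos i hi j hj hij := (f.inner_map_map _ _).trans_le (hx.inner_le_cos i hi j hj hij)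

lemma disjSum {t : Finset κ} {y : κ → E} (hx : IsCodeFamily θ s x) (hy : IsCodeFamily θ t y)
    (hxy : ∀ i ∈ s, ∀ j ∈ t, ⟪x i, y j⟫ ≤ cos θ) :
    IsCodeFamily θ (s.disjSum t) (Sum.elim x y) where
  norm_eq_one := by
    rintro (i | j) h
    · exact hx.norm_eq_one i (Finset.inl_mem_disjSum.1 h)
    · exact hy.norm_eq_one j (Finset.inr_mem_disjSum.1 h)
  inner_le_cos := by
    rintro (i | i) hi (j | j) hj hij <;>
      simp only [Finset.inl_mem_disjSum, Finset.inr_mem_disjSum, Sum.elim_inl, Sum.elim_inr,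
        ne_eq, Sum.inl.injEq, Sum.inr.injEq] at hi hj hij ⊢
    · exact hx.inner_le_cos i hi j hj hij
    · exact hxy i hi j hj
    · exact real_inner_comm (x j) (y i) ▸ hxy j hj i hi
    · exact hy.inner_le_cos i hi j hj hij

lemma injOn (hx : IsCodeFamily θ s x) (hθ : 0 < θ) (hθπ : θ ≤ π) : Set.InjOn x s := by
  intro i hi j hj hij
  by_contra hne
  have hle := hx.inner_le_cos i hi j hj hne
  rw [← hij, real_inner_self_eq_norm_sq, hx.norm_eq_one i hi, one_pow] at hle
  have hlt : cos θ < 1 := cos_zero ▸ cos_lt_cos_of_nonneg_of_le_pi le_rfl hθπ hθ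
  exact hlt.not_ge hle

lemma isCode_image [DecidableEq (EuclideanSpace ℝ (Fin n))] {x : ι → EuclideanSpace ℝ (Fin n)}
    (hx : IsCodeFamily θ s x) (hθ : 0 ≤ θ) (hθπ : θ ≤ π) : IsCode θ (s.image x) := by
  refine ⟨Finset.forall_mem_image.2 hx.norm_eq_one, Finset.forall_mem_image.2 fun i hi =>
    Finset.forall_mem_image.2 fun j hj hij => ?_⟩
  calc θ = arccos (cos θ) := (arccos_cos hθ hθπ).symm
    _ ≤ aDist (x i) (x j) :=
      arccos_le_arccos (hx.inner_le_cos i hi j hj (ne_of_apply_ne x hij))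

lemma card_le_sphereMax [FiniteDimensional ℝ E] (hx : IsCodeFamily θ s x) (hθ : 0 < θ)
    (hθπ : θ ≤ π) : s.card ≤ sphereMax (finrank ℝ E) θ := by
  classical
  have hy := hx.map (stdOrthonormalBasis ℝ E).repr.toLinearIsometry
  rw [← Finset.card_image_of_injOn (hy.injOn hθ hθπ)]
  exact (hy.isCode_image hθ.le hθπ).card_le_sphereMax hθ hθπ

end IsCodeFamily

section UnitVector

variable {e : E}

lemma inner_reflection_orthogonal_span_singleton (he : ‖e‖ = 1) (x y : E) :
    ⟪x, (ℝ ∙ e)ᗮ.reflection y⟫ = ⟪x, y⟫ - 2 * (⟪x, e⟫ * ⟪y, e⟫) := by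
  simp only [reflection_orthogonal_apply, reflection_singleton_apply, he, inner_neg_right,
    inner_sub_right, inner_smul_right, two_smul, inner_add_right, RCLike.ofReal_real_eq_id, id_eq,
    one_pow, div_one, real_inner_comm y e]
  ring

lemma inner_orthogonalProjectionOnto_orthogonal_span_singleton (he : ‖e‖ = 1) (x y : E) :
    ⟪(ℝ ∙ e)ᗮ.orthogonalProjectionOnto x, (ℝ ∙ e)ᗮ.orthogonalProjectionOnto y⟫ =
      ⟪x, y⟫ - ⟪x, e⟫ * ⟪y, e⟫ := by
  rw [inner_orthogonalProjectionOnto_eq_of_mem_left, coe_orthogonalProjectionOnto_apply,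
    starProjection_orthogonal_val, starProjection_unit_singleton ℝ he, inner_sub_left,
    real_inner_smul_left, real_inner_comm x e, real_inner_comm y e]

lemma norm_sq_orthogonalProjectionOnto_orthogonal_span_singleton (he : ‖e‖ = 1) (x : E) :
    ‖(ℝ ∙ e)ᗮ.orthogonalProjectionOnto x‖ ^ 2 = ‖x‖ ^ 2 - ⟪x, e⟫ ^ 2 := by
  rw [← real_inner_self_eq_norm_sq, inner_orthogonalProjectionOnto_orthogonal_span_singleton he,
    real_inner_self_eq_norm_sq, sq ⟪x, e⟫]

lemma finrank_orthogonal_span_singleton_eq_sub_one [FiniteDimensional ℝ E] (he : e ≠ 0) :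
    finrank ℝ (ℝ ∙ e)ᗮ = finrank ℝ E - 1 := by
  rw [← (ℝ ∙ e).finrank_add_finrank_orthogonal, finrank_span_singleton he, Nat.add_sub_cancel_left]

lemma exists_norm_eq_one_inner_eq_zero [FiniteDimensional ℝ E] (he : e ≠ 0)
    (hE : 2 ≤ finrank ℝ E) : ∃ u : E, ‖u‖ = 1 ∧ ⟪u, e⟫ = 0 := by
  have : Nontrivial (ℝ ∙ e)ᗮ := Module.nontrivial_of_finrank_pos (R := ℝ) (by
    rw [finrank_orthogonal_span_singleton_eq_sub_one he]
    omega)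
  obtain ⟨u, hu⟩ := exists_norm_eq (ℝ ∙ e)ᗮ zero_le_one
  exact ⟨u, hu, mem_orthogonal_singleton_iff_inner_left.1 u.2⟩

lemma cos_le_norm_orthogonalProjectionOnto {x : E} {α : ℝ} (he : ‖e‖ = 1) (hx : ‖x‖ = 1)
    (hxe : 0 ≤ ⟪x, e⟫) (hα : ⟪x, e⟫ ≤ sin α) :
    cos α ≤ ‖(ℝ ∙ e)ᗮ.orthogonalProjectionOnto x‖ := by
  refine le_of_abs_le (abs_le_of_sq_le_sq ?_ (norm_nonneg _))
  rw [norm_sq_orthogonalProjectionOnto_orthogonal_span_singleton he, hx, one_pow, cos_sq']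
  gcongr

lemma inner_orthogonalProjectionOnto_le_mul_norm {x y : E} {c : ℝ} (he : ‖e‖ = 1) (hx : ‖x‖ = 1)
    (hc₀ : 0 ≤ c) (hc₁ : c ≤ 1) (hxe : 0 ≤ ⟪x, e⟫) (hxye : ⟪x, e⟫ ≤ ⟪y, e⟫) (hxy : ⟪x, y⟫ ≤ c) :
    ⟪(ℝ ∙ e)ᗮ.orthogonalProjectionOnto x, (ℝ ∙ e)ᗮ.orthogonalProjectionOnto y⟫ ≤
      c * ‖(ℝ ∙ e)ᗮ.orthogonalProjectionOnto x‖ := by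
  have hle : ‖(ℝ ∙ e)ᗮ.orthogonalProjectionOnto x‖ ≤ 1 :=
    (norm_orthogonalProjectionOnto_apply_le _ x).trans_eq hx
  calc ⟪(ℝ ∙ e)ᗮ.orthogonalProjectionOnto x, (ℝ ∙ e)ᗮ.orthogonalProjectionOnto y⟫
    _ = ⟪x, y⟫ - ⟪x, e⟫ * ⟪y, e⟫ := inner_orthogonalProjectionOnto_orthogonal_span_singleton he x y
    _ ≤ c - ⟪x, e⟫ * ⟪x, e⟫ := by gcongr
    _ ≤ c - c * (⟪x, e⟫ * ⟪x, e⟫) :=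
      sub_le_sub_left (mul_le_of_le_one_left (mul_self_nonneg _) hc₁) c
    _ = c * ‖(ℝ ∙ e)ᗮ.orthogonalProjectionOnto x‖ ^ 2 := by
      rw [norm_sq_orthogonalProjectionOnto_orthogonal_span_singleton he, hx]
      ring
    _ ≤ c * ‖(ℝ ∙ e)ᗮ.orthogonalProjectionOnto x‖ := by
      gcongr
      exact pow_le_of_le_one (norm_nonneg _) hle two_ne_zero

lemma inner_orthogonalProjectionOnto_le_div_cos_mul {x y : E} {c α : ℝ} (he : ‖e‖ = 1)
    (hx : ‖x‖ = 1) (hy : ‖y‖ = 1) (hc₀ : 0 ≤ c) (hc₁ : c ≤ 1) (hcos : 0 < cos α)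
    (hxe : 0 ≤ ⟪x, e⟫) (hxα : ⟪x, e⟫ ≤ sin α) (hye : 0 ≤ ⟪y, e⟫) (hyα : ⟪y, e⟫ ≤ sin α)
    (hxy : ⟪x, y⟫ ≤ c) :
    ⟪(ℝ ∙ e)ᗮ.orthogonalProjectionOnto x, (ℝ ∙ e)ᗮ.orthogonalProjectionOnto y⟫ ≤
      c / cos α * (‖(ℝ ∙ e)ᗮ.orthogonalProjectionOnto x‖ *
        ‖(ℝ ∙ e)ᗮ.orthogonalProjectionOnto y‖) := by
  wlog hle : ⟪x, e⟫ ≤ ⟪y, e⟫ generalizing x y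
  · rw [real_inner_comm, mul_comm ‖_‖]
    exact this hy hx hye hyα hxe hxα (real_inner_comm x y ▸ hxy) (le_of_not_ge hle)
  calc ⟪(ℝ ∙ e)ᗮ.orthogonalProjectionOnto x, (ℝ ∙ e)ᗮ.orthogonalProjectionOnto y⟫
    _ ≤ c * ‖(ℝ ∙ e)ᗮ.orthogonalProjectionOnto x‖ :=
      inner_orthogonalProjectionOnto_le_mul_norm he hx hc₀ hc₁ hxe hle hxy
    _ = c / cos α * (‖(ℝ ∙ e)ᗮ.orthogonalProjectionOnto x‖ * cos α) := by
      rw [mul_comm ‖_‖, ← mul_assoc, div_mul_cancel₀ c hcos.ne']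
    _ ≤ _ := by
      gcongr
      exact cos_le_norm_orthogonalProjectionOnto he hy hye hyα

lemma inner_cos_smul_sub_sin_smul {u v : E} (he : ‖e‖ = 1) (hu : ⟪u, e⟫ = 0) (hv : ⟪v, e⟫ = 0)
    (θ : ℝ) :
    ⟪cos θ • u - sin θ • e, cos θ • v - sin θ • e⟫ = cos θ ^ 2 * ⟪u, v⟫ + sin θ ^ 2 := by
  simp only [inner_sub_left, inner_sub_right, real_inner_smul_left, real_inner_smul_right, hu,
    real_inner_comm v e, hv, inner_self_eq_one_of_norm_eq_one he]
  ring

lemma norm_cos_smul_sub_sin_smul {u : E} (he : ‖e‖ = 1) (hu : ‖u‖ = 1) (hue : ⟪u, e⟫ = 0)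
    (θ : ℝ) : ‖cos θ • u - sin θ • e‖ = 1 := by
  rw [← pow_eq_one_iff_of_nonneg (norm_nonneg _) two_ne_zero, ← real_inner_self_eq_norm_sq,
    inner_cos_smul_sub_sin_smul he hue hue, real_inner_self_eq_norm_sq, hu, one_pow, mul_one,
    cos_sq_add_sin_sq]

lemma inner_cos_smul_sub_sin_smul_le {x u : E} {θ : ℝ} (hx : ‖x‖ = 1) (hu : ‖u‖ = 1)
    (hxe : 0 ≤ ⟪x, e⟫) (hcos : 0 ≤ cos θ) (hsin : 0 ≤ sin θ) :
    ⟪x, cos θ • u - sin θ • e⟫ ≤ cos θ := by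
  have hxu : ⟪x, u⟫ ≤ 1 := by simpa only [hx, hu, mul_one] using real_inner_le_norm x u
  calc ⟪x, cos θ • u - sin θ • e⟫ = cos θ * ⟪x, u⟫ - sin θ * ⟪x, e⟫ := by
        rw [inner_sub_right, real_inner_smul_right, real_inner_smul_right]
    _ ≤ cos θ * ⟪x, u⟫ := sub_le_self _ (mul_nonneg hsin hxe)
    _ ≤ cos θ := mul_le_of_le_one_right hcos hxu

end UnitVector

lemma cos_div_cos_half_mem_Ico {θ : ℝ} (hθ : 0 < θ) (hθπ : θ ≤ π / 2) :
    cos θ / cos (θ / 2) ∈ Set.Ico 0 1 := by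
  have hcos : 0 < cos (θ / 2) := cos_pos_of_mem_Ioo ⟨by linarith, by linarith⟩
  refine ⟨div_nonneg (cos_nonneg_of_neg_pi_div_two_le_of_le (by linarith) hθπ) hcos.le, ?_⟩
  rw [div_lt_one hcos]
  exact cos_lt_cos_of_nonneg_of_le_pi (by linarith) (by linarith) (by linarith)

lemma sin_sq_sub_cos_sq_le_cos {θ : ℝ} (hθ : 0 ≤ θ) (hθπ : θ ≤ π / 3) :
    sin θ ^ 2 - cos θ ^ 2 ≤ cos θ := by
  have hcos : 1 / 2 ≤ cos θ :=
    cos_pi_div_three ▸ cos_le_cos_of_nonneg_of_le_pi hθ (by linarith [pi_pos]) hθπ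
  rw [sin_sq]
  nlinarith

lemma isCodeFamily_normalize {θ : ℝ} {s : Finset ι} {x : ι → E} (hx : ∀ i ∈ s, x i ≠ 0)
    (hinner : ∀ i ∈ s, ∀ j ∈ s, i ≠ j → ⟪x i, x j⟫ ≤ cos θ * (‖x i‖ * ‖x j‖)) :
    IsCodeFamily θ s (NormedSpace.normalize ∘ x) where
  norm_eq_one i hi := NormedSpace.norm_normalize (hx i hi)
  inner_le_cos i hi j hj hij := by
    have hi₀ : 0 < ‖x i‖ := norm_pos_iff.2 (hx i hi)
    have hj₀ : 0 < ‖x j‖ := norm_pos_iff.2 (hx j hj)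
    simp only [Function.comp_apply, NormedSpace.normalize, real_inner_smul_left,
      real_inner_smul_right]
    rw [← mul_assoc, ← mul_inv, inv_mul_le_iff₀ (by positivity)]
    linarith [hinner i hi j hj hij]

lemma isCodeFamily_pair {θ : ℝ} {x y : E} (hx : ‖x‖ = 1) (hy : ‖y‖ = 1) (hxy : ⟪x, y⟫ ≤ cos θ) :
    IsCodeFamily θ Finset.univ ![x, y] := by
  have hyx : ⟪y, x⟫ ≤ cos θ := real_inner_comm x y ▸ hxy
  constructor <;> simp [Fin.forall_fin_two, hx, hy, hxy, hyx]

namespace IsCodeFamily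

variable [FiniteDimensional ℝ E] {θ : ℝ} {s : Finset ι} {x : ι → E} {e : E}

lemma card_add_card_filter_le_sphereMax (hx : IsCodeFamily θ s x) (he : ‖e‖ = 1)
    (hpos : ∀ i ∈ s, 0 ≤ ⟪x i, e⟫) (hθ : 0 < θ) (hθπ : θ ≤ π) :
    s.card + {i ∈ s | sin (θ / 2) ≤ ⟪x i, e⟫}.card ≤ sphereMax (finrank ℝ E) θ := by
  have hcross : ∀ i ∈ s, ∀ j ∈ s, sin (θ / 2) ≤ ⟪x j, e⟫ →
      ⟪x i, (ℝ ∙ e)ᗮ.reflection (x j)⟫ ≤ cos θ := by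
    intro i hi j hj hhigh
    rw [inner_reflection_orthogonal_span_singleton he]
    by_cases hij : i = j
    · have hsin : 0 ≤ sin (θ / 2) := sin_nonneg_of_nonneg_of_le_pi (by linarith) (by linarith)
      calc ⟪x i, x j⟫ - 2 * (⟪x i, e⟫ * ⟪x j, e⟫) = 1 - 2 * ⟪x j, e⟫ ^ 2 := by
            rw [hij, real_inner_self_eq_norm_sq, hx.norm_eq_one j hj]
            ring
        _ ≤ 1 - 2 * sin (θ / 2) ^ 2 := by gcongr
        _ = cos θ := by rw [← cos_two_mul_eq_one_sub, mul_div_cancel₀ θ two_ne_zero]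
    · linarith [hx.inner_le_cos i hi j hj hij, mul_nonneg (hpos i hi) (hpos j hj)]
  have hreflected := (hx.mono (Finset.filter_subset (fun i => sin (θ / 2) ≤ ⟪x i, e⟫) s)).map
    (ℝ ∙ e)ᗮ.reflection.toLinearIsometry
  rw [← Finset.card_disjSum]
  exact (hx.disjSum hreflected fun i hi j hj =>
    hcross i hi j (Finset.mem_filter.1 hj).1 (Finset.mem_filter.1 hj).2).card_le_sphereMax hθ hθπ

lemma card_filter_le_sphereMax (hx : IsCodeFamily θ s x) (he : ‖e‖ = 1)
    (hpos : ∀ i ∈ s, 0 ≤ ⟪x i, e⟫) (hθ : 0 < θ) (hθπ : θ ≤ π / 2) :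
    {i ∈ s | ¬ sin (θ / 2) ≤ ⟪x i, e⟫}.card ≤
      sphereMax (finrank ℝ E - 1) (arccos (cos θ / cos (θ / 2))) := by
  have hcos : 0 < cos (θ / 2) := cos_pos_of_mem_Ioo ⟨by linarith, by linarith⟩
  have hcos₀ : 0 ≤ cos θ := cos_nonneg_of_neg_pi_div_two_le_of_le (by linarith) hθπ
  obtain ⟨hratio₀, hratio₁⟩ := cos_div_cos_half_mem_Ico hθ hθπ
  have he₀ : e ≠ 0 := norm_ne_zero_iff.1 (he.trans_ne one_ne_zero)
  rw [← finrank_orthogonal_span_singleton_eq_sub_one he₀]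
  refine (isCodeFamily_normalize (x := (ℝ ∙ e)ᗮ.orthogonalProjectionOnto ∘ x) ?_
    ?_).card_le_sphereMax (arccos_pos.2 hratio₁) (arccos_le_pi _)
  · intro i hi
    obtain ⟨his, hlow⟩ := Finset.mem_filter.1 hi
    exact norm_pos_iff.1 <| hcos.trans_le <|
      cos_le_norm_orthogonalProjectionOnto he (hx.norm_eq_one i his) (hpos i his)
        (le_of_not_ge hlow)
  · intro i hi j hj hij
    obtain ⟨his, hilow⟩ := Finset.mem_filter.1 hi
    obtain ⟨hjs, hjlow⟩ := Finset.mem_filter.1 hj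
    rw [cos_arccos (by linarith) hratio₁.le]
    exact inner_orthogonalProjectionOnto_le_div_cos_mul he (hx.norm_eq_one i his)
      (hx.norm_eq_one j hjs) hcos₀ (cos_le_one θ) hcos (hpos i his) (le_of_not_ge hilow)
      (hpos j hjs) (le_of_not_ge hjlow) (hx.inner_le_cos i his j hjs hij)

theorem two_mul_card_le_sphereMax_add_sphereMax (hx : IsCodeFamily θ s x) (he : ‖e‖ = 1)
    (hpos : ∀ i ∈ s, 0 ≤ ⟪x i, e⟫) (hθ : 0 < θ) (hθπ : θ ≤ π / 2) :
    2 * s.card ≤ sphereMax (finrank ℝ E - 1) (arccos (cos θ / cos (θ / 2))) +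
      sphereMax (finrank ℝ E) θ := by
  have hhigh := hx.card_add_card_filter_le_sphereMax he hpos hθ (by linarith)
  have hlow := hx.card_filter_le_sphereMax he hpos hθ hθπ
  have hsplit := Finset.card_filter_add_card_filter_not (s := s) fun i => sin (θ / 2) ≤ ⟪x i, e⟫
  omega

theorem card_add_two_le_sphereMax (hx : IsCodeFamily θ s x) (he : ‖e‖ = 1)
    (hpos : ∀ i ∈ s, 0 ≤ ⟪x i, e⟫) (hE : 2 ≤ finrank ℝ E) (hθ : 0 < θ) (hθπ : θ ≤ π / 3) :
    s.card + 2 ≤ sphereMax (finrank ℝ E) θ := by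
  have hcos : 0 ≤ cos θ := cos_nonneg_of_neg_pi_div_two_le_of_le (by linarith) (by linarith)
  have hsin : 0 ≤ sin θ := sin_nonneg_of_nonneg_of_le_pi hθ.le (by linarith)
  obtain ⟨u, hu, hue⟩ :=
    exists_norm_eq_one_inner_eq_zero (norm_ne_zero_iff.1 (he.trans_ne one_ne_zero)) hE
  have hu' : ‖-u‖ = 1 := (norm_neg u).trans hu
  have hue' : ⟪-u, e⟫ = 0 := by rw [inner_neg_left, hue, neg_zero]
  have hpair : IsCodeFamily θ Finset.univ
      ![cos θ • u - sin θ • e, cos θ • (-u) - sin θ • e] := by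
    refine isCodeFamily_pair (norm_cos_smul_sub_sin_smul he hu hue θ)
      (norm_cos_smul_sub_sin_smul he hu' hue' θ) ?_
    rw [inner_cos_smul_sub_sin_smul he hue hue', inner_neg_right, real_inner_self_eq_norm_sq, hu]
    linarith [sin_sq_sub_cos_sq_le_cos hθ.le hθπ]
  have hcross : ∀ i ∈ s, ∀ j ∈ Finset.univ,
      ⟪x i, ![cos θ • u - sin θ • e, cos θ • (-u) - sin θ • e] j⟫ ≤ cos θ := by
    intro i hi j _
    fin_cases j
    · exact inner_cos_smul_sub_sin_smul_le (hx.norm_eq_one i hi) hu (hpos i hi) hcos hsin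
    · exact inner_cos_smul_sub_sin_smul_le (hx.norm_eq_one i hi) hu' (hpos i hi) hcos hsin
  simpa only [Finset.card_disjSum, Finset.card_univ, Fintype.card_fin] using
    (hx.disjSum hpair hcross).card_le_sphereMax hθ (by linarith)

end IsCodeFamily

lemma norm_north {n : ℕ} (hn : 0 < n) : ‖north n‖ = 1 := by
  rw [north, dif_pos hn, EuclideanSpace.single, PiLp.norm_single, norm_one]

theorem stmt17_general (n : ℕ) (hn : 2 ≤ n) {θ : ℝ} (hθ : 0 < θ) (hθπ : θ ≤ π / 3) :
    2 * capMax n θ (π / 2) ≤ sphereMax (n - 1) (arccos (cos θ / cos (θ / 2))) + sphereMax n θ ∧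
      capMax n θ (π / 2) + 2 ≤ sphereMax n θ := by
  obtain ⟨C, hC, hcap, hcard⟩ := exists_isCode_card_eq_capMax n hθ (by linarith) (π / 2)
  have hfamily := hC.isCodeFamily hθ.le
  have he : ‖north n‖ = 1 := norm_north (by omega)
  have hpos : ∀ x ∈ C, 0 ≤ ⟪id x, north n⟫ := fun x hxC => arccos_le_pi_div_two.1 (hcap x hxC)
  have hdim : finrank ℝ (EuclideanSpace ℝ (Fin n)) = n := finrank_euclideanSpace_fin
  rw [← hcard]
  constructor
  · simpa only [hdim] using
      hfamily.two_mul_card_le_sphereMax_add_sphereMax he hpos hθ (by linarith)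
  · simpa only [hdim] using
      hfamily.card_add_two_le_sphereMax he hpos (hn.trans_eq hdim.symm) hθ hθπ

lemma cos_pi_div_three_div_cos_half : cos (π / 3) / cos (π / 3 / 2) = 1 / √3 := by
  rw [div_div, show (3 : ℝ) * 2 = 6 by norm_num, cos_pi_div_three, cos_pi_div_six,
    div_div_div_cancel_right₀ two_ne_zero]

end

theorem stmt17 (n : ℕ) (hn : 3 ≤ n) :
    2 * capMax n (Real.pi / 3) (Real.pi / 2) ≤
        sphereMax (n - 1) (Real.arccos (1 / Real.sqrt 3)) + sphereMax n (Real.pi / 3) ∧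
      capMax n (Real.pi / 3) (Real.pi / 2) ≤ sphereMax n (Real.pi / 3) - 2 := by
  obtain ⟨hsum, hadd⟩ := stmt17_general n (by omega) (by positivity : 0 < Real.pi / 3) le_rfl
  exact ⟨cos_pi_div_three_div_cos_half ▸ hsum, Nat.le_sub_of_add_le hadd⟩
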